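/- Let 4 ≤ n ≤ 6 and let k be a positive integer with k < 3^n/(2n+1). For the Segre product of n copies of ℙ² (so V = (ℂ³)^{⊗n}), the general linear subspace of V of dimension k(2n+1) which is tangent at k general points (namely, the span of the k tangent spaces at k general decomposable tensors) is tangent only at those points; consequently the product of n copies of ℙ² is k-identifiable for all k < 3^n/(2n+1). -/

import Mathlib

open scoped TensorProduct
open PiTensorProduct

noncomputable section

/-- The space of tensors `V = ℂ^{a₁+1} ⊗ ⋯ ⊗ ℂ^{a_q+1}`. -/
abbrev Ten (q : ℕ) (a : Fin q → ℕ) : Type :=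
  ⨂[ℂ] i : Fin q, (Fin (a i + 1) → ℂ)

/-- Index type for the coordinates on the parameter space `W_k`. -/
abbrev WIdx (q : ℕ) (a : Fin q → ℕ) (k : ℕ) : Type :=
  Fin k × Σ j : Fin q, Fin (a j + 1)

/-- Index type for the standard (decomposable) basis of `Ten q a`. -/
abbrev BIdx (q : ℕ) (a : Fin q → ℕ) : Type := ∀ j : Fin q, Fin (a j + 1)

/-- A tensor is decomposable if it is `v₁ ⊗ ⋯ ⊗ v_q` with all `vᵢ ≠ 0`. -/
def IsDecomposable {q : ℕ} {a : Fin q → ℕ} (t : Ten q a) : Prop :=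
  ∃ v : ∀ j : Fin q, Fin (a j + 1) → ℂ, (∀ j, v j ≠ 0) ∧ t = tprod ℂ v

/-- The affine tangent space at `v₁ ⊗ ⋯ ⊗ v_q` to the cone over the Segre variety:
the span of all tensors obtained by replacing one factor of `v` by an arbitrary vector. -/
def tangent {q : ℕ} (a : Fin q → ℕ) (v : ∀ j : Fin q, Fin (a j + 1) → ℂ) :
    Submodule ℂ (Ten q a) :=
  Submodule.span ℂ
    {x | ∃ (j : Fin q) (u : Fin (a j + 1) → ℂ), x = tprod ℂ (Function.update v j u)}

/-- The map `Φ : W_k → V` sending a `k`-tuple of factor vectors to the sum of the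
corresponding decomposable tensors. -/
def Phi {q : ℕ} (a : Fin q → ℕ) {k : ℕ}
    (p : Fin k → ∀ j : Fin q, Fin (a j + 1) → ℂ) : Ten q a :=
  ∑ i, tprod ℂ (p i)

/-- Evaluation of a polynomial function on `W_k` at a parameter point. -/
def evalW {q : ℕ} {a : Fin q → ℕ} {k : ℕ}
    (F : MvPolynomial (WIdx q a k) ℂ)
    (p : Fin k → ∀ j : Fin q, Fin (a j + 1) → ℂ) : ℂ :=
  MvPolynomial.eval (fun x => p x.1 x.2.1 x.2.2) F

/-- `k`-identifiability of the Segre product `ℙ^{a₁} × ⋯ × ℙ^{a_q}`: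
there is a nonzero polynomial function `F` on `W_k` such that whenever `F(p) ≠ 0`,
the tensor `Φ(p)` has a rank-`k` decomposition, and any two rank-`k` decompositions
of `Φ(p)` agree as multisets of decomposable tensors. -/
def Identifiable (q : ℕ) (a : Fin q → ℕ) (k : ℕ) : Prop :=
  ∃ F : MvPolynomial (WIdx q a k) ℂ,
    (∃ p, evalW F p ≠ 0) ∧
    ∀ p, evalW F p ≠ 0 →
      ((∃ t : Fin k → Ten q a, (∀ i, IsDecomposable (t i)) ∧ ∑ i, t i = Phi a p) ∧
       ∀ s t : Fin k → Ten q a,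
         (∀ i, IsDecomposable (s i)) → (∀ i, IsDecomposable (t i)) →
         ∑ i, s i = Phi a p → ∑ i, t i = Phi a p →
         Finset.univ.val.map s = Finset.univ.val.map t)

/-- The standard decomposable basis vector of `Ten q a` indexed by `f`. -/
def basisVec {q : ℕ} (a : Fin q → ℕ) (f : BIdx q a) : Ten q a :=
  tprod ℂ fun j => Pi.single (f j) 1

/-- The vector of `Ten q a` with coordinates `c` in the standard basis. -/
def fromCoords {q : ℕ} (a : Fin q → ℕ) (c : BIdx q a → ℂ) : Ten q a :=
  ∑ f : BIdx q a, c f • basisVec a f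

/-- Evaluation of a polynomial function on `W_k × V^e` at a parameter point. -/
def evalWV {q : ℕ} {a : Fin q → ℕ} {k e : ℕ}
    (F : MvPolynomial (WIdx q a k ⊕ (Fin e × BIdx q a)) ℂ)
    (p : Fin k → ∀ j : Fin q, Fin (a j + 1) → ℂ)
    (c : Fin e → BIdx q a → ℂ) : ℂ :=
  MvPolynomial.eval (Sum.elim (fun x => p x.1 x.2.1 x.2.2) (fun y => c y.1 y.2)) F

/-- `TangentGeneral q a k d` says: the general linear subspace of `V` of dimension `d`
which is tangent to the Segre at `k` general points is tangent only at those points.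
Concretely, with `e = d - k(1 + Σᵢ aᵢ)`, there is a nonzero polynomial function `F` on
`W_k × V^e` such that whenever `F ≠ 0` at `(p, c)`, the space `L` spanned by the tangent
spaces at the `k` decomposable tensors determined by `p` together with the `e` extra
vectors determined by `c` has dimension exactly `d`, and any decomposable tensor whose
tangent space lies in `L` is a scalar multiple of one of the `k` given ones. -/
def TangentGeneral (q : ℕ) (a : Fin q → ℕ) (k d : ℕ) : Prop :=
  ∃ F : MvPolynomial (WIdx q a k ⊕ (Fin (d - k * (1 + ∑ j, a j)) × BIdx q a)) ℂ,
    (∃ p c, evalWV F p c ≠ 0) ∧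
    ∀ p c, evalWV F p c ≠ 0 →
      (Module.finrank ℂ
          ↥((⨆ i, tangent a (p i)) ⊔
            Submodule.span ℂ (Set.range fun m => fromCoords a (c m))) = d ∧
       ∀ w : ∀ j : Fin q, Fin (a j + 1) → ℂ, (∀ j, w j ≠ 0) →
         tangent a w ≤
           (⨆ i, tangent a (p i)) ⊔
             Submodule.span ℂ (Set.range fun m => fromCoords a (c m)) →
         ∃ (i : Fin k) (t : ℂ), tprod ℂ w = t • tprod ℂ (p i))

/-!
At the generic point, over an algebraic closure of the field of rational functions in the
coordinates of the points `p i`, one can differentiate with respect to these coordinates. Let `h`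
be a linear form annihilating the tangent spaces at all `p i`, and suppose that the tangent space
at `w` lies in their span `L`. Then `h` annihilates it, so differentiating `h ⬝ᵥ segre w = 0` shows
that the derivatives of `h` annihilate `segre w`. On the tangent space at `p i` these derivatives
are given by the Hessian of `h`. If it is nondegenerate, then `segre w` has no component in the
tangent directions: it is a combination of the `segre (p i)` and, the tangent spaces at the `p i`
being independent, it is proportional to one of them. Differentiating an identity `∑ segre (s i) =
∑ segre (p i)` shows that `L` is contained in the span of the tangent spaces at the `s i`, hence
equal to it by dimension, which gives identifiability.

The condition on `h` is open, hence it can be checked at one `k`-tuple of points over `𝔽₂`, and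
only for the largest value `8`, `22`, `56` of `k` when `n = 4`, `5`, `6`. The Nullstellensatz
carries the conclusion from the generic point to general points over `ℂ`.
-/

section Segre

variable {q : ℕ} {a : Fin q → ℕ} {R S : Type*} [CommRing R] [CommRing S]

/-- The parameters `(v₁, …, v_q)` of a tensor `v₁ ⊗ ⋯ ⊗ v_q`, over an arbitrary coefficient
type so that one can reduce modulo a prime and pass to generic points. -/
abbrev Factors (a : Fin q → ℕ) (R : Type*) : Type _ := ∀ j, Fin (a j + 1) → R

/-- Applying a map of coefficients, such as a ring homomorphism or a derivation, to all factors. -/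
abbrev mapFactors {R S : Type*} (φ : R → S) (v : Factors a R) : Factors a S :=
  fun j c => φ (v j c)

/-- The coordinates of the tensor `v₁ ⊗ ⋯ ⊗ v_q` in the standard basis. -/
def segre (v : Factors a R) : BIdx q a → R := fun f => ∏ j, v j (f j)

/-- Replacing the `j`-th factor by a standard basis vector. -/
abbrev setFactor (v : Factors a R) (j : Fin q) (c : Fin (a j + 1)) : Factors a R :=
  Function.update v j (Pi.single c 1)

/-- The tangent space at `segre v` to the cone over the Segre variety, in coordinates. -/
def tangentSpace (v : Factors a R) : Submodule R (BIdx q a → R) :=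
  Submodule.span R (Set.range fun x : Σ j, Fin (a j + 1) => segre (setFactor v x.1 x.2))

/-- Parameters of tensors which span the tangent space at `segre v` when the coordinates
`v j (c j)` do not vanish: `v` itself, and `v` with one factor replaced by a standard basis vector
other than the `c j`-th. -/
def frame (c : BIdx q a) (v : Factors a R) : Option (Σ j, Fin (a j)) → Factors a R
  | none => v
  | some x => setFactor v x.1 ((c x.1).succAbove x.2)

/-- The Hessian at `v` of the linear form with coefficients `h`, restricted to the Segre variety
and expressed in the chart where the zeroth coordinate of every factor is fixed. -/
def hessian (h : BIdx q a → R) (v : Factors a R) :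
    Matrix (Σ j, Fin (a j)) (Σ j, Fin (a j)) R :=
  fun x y => if x.1 = y.1 then 0 else
    h ⬝ᵥ segre (setFactor (setFactor v x.1 x.2.succ) y.1 y.2.succ)

theorem map_segre (φ : R →+* S) (v : Factors a R) (f : BIdx q a) :
    φ (segre v f) = segre (mapFactors φ v) f := by
  simp [segre]

theorem comp_segre (φ : R →+* S) (v : Factors a R) : φ ∘ segre v = segre (mapFactors φ v) :=
  funext (map_segre φ v)

theorem comp_sum_segre_sub {ι : Type*} [Fintype ι] (φ : R →+* S) (s t : ι → Factors a R) :
    φ ∘ (∑ i, segre (s i) - ∑ i, segre (t i)) =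
      ∑ i, segre (mapFactors φ (s i)) - ∑ i, segre (mapFactors φ (t i)) := by
  simp only [← comp_segre]
  funext f
  simp

theorem mapFactors_setFactor (φ : R →+* S) (v : Factors a R) (j : Fin q) (c : Fin (a j + 1)) :
    mapFactors φ (setFactor v j c) = setFactor (mapFactors φ v) j c := by
  funext i d
  by_cases h : i = j
  · subst h; simp [mapFactors, Pi.single_apply, apply_ite φ]
  · simp [mapFactors, Function.update_of_ne h]

theorem mapFactors_frame (φ : R →+* S) (c : BIdx q a) (v : Factors a R)
    (r : Option (Σ j, Fin (a j))) :
    mapFactors φ (frame c v r) = frame c (mapFactors φ v) r := by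
  rcases r with _ | x
  · rfl
  · exact mapFactors_setFactor φ v _ _

theorem map_hessian (φ : R →+* S) (h : BIdx q a → R) (v : Factors a R) :
    (hessian h v).map φ = hessian (φ ∘ h) (mapFactors φ v) := by
  ext x y
  simp only [Matrix.map_apply, hessian]
  split_ifs
  · exact map_zero φ
  · simp only [dotProduct, map_sum, map_mul, map_segre, mapFactors_setFactor, Function.comp_apply]

/-- `segre` as a multilinear map. -/
def segreMultilinear (a : Fin q → ℕ) (R : Type*) [CommRing R] :
    MultilinearMap R (fun j => Fin (a j + 1) → R) (BIdx q a → R) :=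
  MultilinearMap.pi fun f =>
    (MultilinearMap.mkPiAlgebra R (Fin q) R).compLinearMap fun j => LinearMap.proj (f j)

theorem segreMultilinear_apply (v : Factors a R) : segreMultilinear a R v = segre v := by
  ext f; simp [segreMultilinear, segre]

theorem segre_eq_zero {v : Factors a R} {j : Fin q} (h : v j = 0) : segre v = 0 := by
  rw [← segreMultilinear_apply, MultilinearMap.map_coord_zero _ j h]

theorem segre_update_eq_sum (v : Factors a R) (j : Fin q) (u : Fin (a j + 1) → R) :
    segre (Function.update v j u) = ∑ c, u c • segre (setFactor v j c) := by
  simp only [← segreMultilinear_apply]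
  conv_lhs => rw [pi_eq_sum_univ' u, MultilinearMap.map_update_sum]
  refine Finset.sum_congr rfl fun c _ => ?_
  rw [MultilinearMap.map_update_smul]

theorem segre_eq_sum (v : Factors a R) (j : Fin q) :
    segre v = ∑ c, v j c • segre (setFactor v j c) := by
  rw [← segre_update_eq_sum, Function.update_eq_self]

theorem segre_update_mem_tangentSpace (v : Factors a R) (j : Fin q) (u : Fin (a j + 1) → R) :
    segre (Function.update v j u) ∈ tangentSpace v := by
  rw [segre_update_eq_sum]
  exact Submodule.sum_mem _ fun c _ => Submodule.smul_mem _ _ (Submodule.subset_span ⟨⟨j, c⟩, rfl⟩)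

theorem segre_mem_tangentSpace [NeZero q] (v : Factors a R) : segre v ∈ tangentSpace v := by
  simpa using segre_update_mem_tangentSpace v 0 (v 0)

theorem tangentSpace_le_iff {v : Factors a R} {L : Submodule R (BIdx q a → R)} :
    tangentSpace v ≤ L ↔ ∀ j c, segre (setFactor v j c) ∈ L := by
  simp [tangentSpace, Submodule.span_le, Set.range_subset_iff, Sigma.forall]

theorem iSup_tangentSpace_eq_span {ι : Type*} (p : ι → Factors a R) :
    ⨆ i, tangentSpace (p i) = Submodule.span R (Set.range
      fun x : ι × Σ j, Fin (a j + 1) => segre (setFactor (p x.1) x.2.1 x.2.2)) := by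
  simp_rw [tangentSpace, ← Submodule.span_iUnion]
  congr 1
  ext x
  simp [Prod.exists]

theorem segre_frame_mem_tangentSpace [NeZero q] (c : BIdx q a) (v : Factors a R)
    (r : Option (Σ j, Fin (a j))) : segre (frame c v r) ∈ tangentSpace v := by
  rcases r with _ | x
  · exact segre_mem_tangentSpace v
  · exact segre_update_mem_tangentSpace v _ _

end Segre

section TangentSpace

variable {q : ℕ} {a : Fin q → ℕ} {K : Type*} [Field K]

theorem tangentSpace_le_span_frame {v : Factors a K} {c : BIdx q a} (hv : ∀ j, v j (c j) ≠ 0) :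
    tangentSpace v ≤ Submodule.span K (Set.range fun r => segre (frame c v r)) := by
  rw [tangentSpace_le_iff]
  intro j
  refine (Fin.forall_iff_succAbove (c j)).mpr
    ⟨?_, fun d => Submodule.subset_span ⟨some ⟨j, d⟩, rfl⟩⟩
  have hsum := segre_eq_sum v j
  rw [Fin.sum_univ_succAbove _ (c j)] at hsum
  rw [← Submodule.smul_mem_iff _ (hv j), eq_sub_of_add_eq hsum.symm]
  exact Submodule.sub_mem _ (Submodule.subset_span ⟨none, rfl⟩) (Submodule.sum_mem _ fun d _ =>
    Submodule.smul_mem _ _ (Submodule.subset_span ⟨some ⟨j, d⟩, rfl⟩))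

theorem span_frame_eq_tangentSpace [NeZero q] {v : Factors a K} {c : BIdx q a}
    (hv : ∀ j, v j (c j) ≠ 0) :
    Submodule.span K (Set.range fun r => segre (frame c v r)) = tangentSpace v :=
  le_antisymm
    (Submodule.span_le.mpr (Set.range_subset_iff.mpr (segre_frame_mem_tangentSpace c v)))
    (tangentSpace_le_span_frame hv)

/-- Vanishing factors are harmless here: replacing them enlarges the tangent space. -/
theorem exists_tangentSpace_le_span_frame (v : Factors a K) :
    ∃ (c : BIdx q a) (w : Factors a K),
      tangentSpace v ≤ Submodule.span K (Set.range fun r => segre (frame c w r)) := by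
  classical
  let w : Factors a K := fun j => if v j = 0 then Pi.single 0 1 else v j
  have hw : ∀ j, w j ≠ 0 := by
    intro j
    dsimp only [w]
    split_ifs with h
    · exact Pi.single_ne_zero_iff.mpr one_ne_zero
    · exact h
  choose c hc using fun j => Function.ne_iff.mp (hw j)
  refine ⟨c, w, le_trans (tangentSpace_le_iff.mpr fun j d => ?_) (tangentSpace_le_span_frame hc)⟩
  by_cases h : ∀ i ≠ j, v i ≠ 0
  · have hvw : setFactor v j d = setFactor w j d :=
      Function.update_eq_iff.mpr ⟨by simp, fun i hij => by simp [hij, w, h i hij]⟩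
    rw [hvw]
    exact segre_update_mem_tangentSpace w j _
  · push Not at h
    obtain ⟨i, hij, hi⟩ := h
    rw [segre_eq_zero (j := i) (by rw [setFactor, Function.update_of_ne hij, hi])]
    exact zero_mem _

theorem card_frame (ι : Type*) [Fintype ι] :
    Fintype.card (ι × Option (Σ j, Fin (a j))) = Fintype.card ι * (1 + ∑ j, a j) := by
  simp [add_comm]

theorem finrank_iSup_tangentSpace_le {ι : Type*} [Fintype ι] (v : ι → Factors a K) :
    Module.finrank K ↥(⨆ i, tangentSpace (v i)) ≤ Fintype.card ι * (1 + ∑ j, a j) := by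
  choose c w hw using fun i => exists_tangentSpace_le_span_frame (v i)
  have h : ⨆ i, tangentSpace (v i) ≤ Submodule.span K (Set.range
      fun x : ι × Option (Σ j, Fin (a j)) => segre (frame (c x.1) (w x.1) x.2)) :=
    iSup_le fun i => (hw i).trans
      (Submodule.span_mono (Set.range_subset_iff.mpr fun r => ⟨(i, r), rfl⟩))
  exact ((Submodule.finrank_mono h).trans (finrank_range_le_card _)).trans_eq (card_frame ι)

theorem iSup_tangentSpace_eq_span_frame [NeZero q] {ι : Type*} {p : ι → Factors a K}
    {c : BIdx q a} (hp : ∀ i j, p i j (c j) ≠ 0) :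
    ⨆ i, tangentSpace (p i) = Submodule.span K (Set.range
      fun x : ι × Option (Σ j, Fin (a j)) => segre (frame c (p x.1) x.2)) := by
  simp_rw [← span_frame_eq_tangentSpace (hp _), ← Submodule.span_iUnion]
  congr 1
  ext x
  simp [Prod.exists]

theorem finrank_iSup_tangentSpace_eq [NeZero q] {ι : Type*} [Fintype ι] {p : ι → Factors a K}
    {c : BIdx q a} (hp : ∀ i j, p i j (c j) ≠ 0) (hli : LinearIndependent K
      fun x : ι × Option (Σ j, Fin (a j)) => segre (frame c (p x.1) x.2)) :
    Module.finrank K ↥(⨆ i, tangentSpace (p i)) = Fintype.card ι * (1 + ∑ j, a j) := by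
  rw [iSup_tangentSpace_eq_span_frame hp, finrank_span_eq_card hli, card_frame]

end TangentSpace

section Lifting

open Matrix

variable {ι κ A F K : Type*} [Fintype κ] [CommRing A] [Field F] [Field K]

theorem exists_mul_eq_one_of_linearIndependent_row [Finite ι] [DecidableEq ι] {M : Matrix ι κ F}
    (hM : LinearIndependent F M.row) : ∃ B : Matrix κ ι F, M * B = 1 := by
  have := Fintype.ofFinite ι
  rw [← mulVec_surjective_iff_exists_right_inverse]
  refine LinearMap.range_eq_top (f := M.mulVecLin).mp (Submodule.eq_top_of_finrank_eq ?_)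
  rw [Module.finrank_fintype_fun_eq_card]
  exact hM.rank_matrix

theorem linearIndependent_row_of_det_mul_ne_zero [Fintype ι] [DecidableEq ι] {M : Matrix ι κ K}
    {B : Matrix κ ι K} (h : (M * B).det ≠ 0) : LinearIndependent K M.row :=
  .of_comp B.vecMulLinear (linearIndependent_rows_of_det_ne_zero h)

/-- Cramer's rule corrects an arbitrary lift `g` of `h₀` to
`det (M * B) • g - B * adj (M * B) * M * g`, which `M` annihilates. -/
theorem exists_lift_mulVec_eq_zero [Finite ι] [DecidableEq ι] {φ : A →+* F}
    (hφ : Function.Surjective φ) {M : Matrix ι κ A} {B : Matrix κ ι A} (hB : (M * B).map φ = 1)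
    {h₀ : κ → F} (h : M.map φ *ᵥ h₀ = 0) : ∃ h : κ → A, M *ᵥ h = 0 ∧ φ ∘ h = h₀ := by
  have := Fintype.ofFinite ι
  obtain ⟨g, rfl⟩ := hφ.comp_left h₀
  refine ⟨(M * B).det • g - B *ᵥ ((M * B).adjugate *ᵥ (M *ᵥ g)), ?_, ?_⟩
  · rw [mulVec_sub, mulVec_mulVec, mulVec_mulVec, mul_adjugate, mulVec_smul, smul_mulVec,
      one_mulVec, sub_self]
  · have hdet : φ (M * B).det = 1 := by
      rw [RingHom.map_det, RingHom.mapMatrix_apply, hB, det_one]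
    have hMg : ∀ i, φ ((M *ᵥ g) i) = 0 := fun i => by rw [RingHom.map_mulVec, h, Pi.zero_apply]
    have hcorrection : ∀ j, φ ((B *ᵥ ((M * B).adjugate *ᵥ (M *ᵥ g))) j) = 0 := fun j => by
      rw [mulVec_mulVec, RingHom.map_mulVec, show φ ∘ (M *ᵥ g) = 0 from funext hMg, mulVec_zero,
        Pi.zero_apply]
    funext j
    simp [hdet, hcorrection, -mulVec_mulVec]

end Lifting

section Certificate

variable {q : ℕ} {a : Fin q → ℕ} {ι ι' A F K : Type*} [CommRing A] [Field F] [Field K]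

/-- A certificate of tangential nondefectivity at `p i₀`: the tangent frames at the points `p i` are
independent, and the linear form `h` annihilates all of them but its restriction to the Segre
variety has a nondegenerate critical point at `p i₀`. -/
structure IsCertificate (p : ι → Factors a F) (h : BIdx q a → F) (i₀ : ι) : Prop where
  linearIndependent : LinearIndependent F
    fun x : ι × Option (Σ j, Fin (a j)) => segre (frame 0 (p x.1) x.2)
  dotProduct_frame : ∀ i r, h ⬝ᵥ segre (frame 0 (p i) r) = 0
  det_hessian_ne_zero : (hessian h (p i₀)).det ≠ 0

/-- The matrix whose rows are the tangent frames at all the points `p i`. -/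
def frameMatrix (p : ι → Factors a A) : Matrix (ι × Option (Σ j, Fin (a j))) (BIdx q a) A :=
  fun x => segre (frame 0 (p x.1) x.2)

theorem map_frameMatrix {B : Type*} [CommRing B] (φ : A →+* B) (p : ι → Factors a A) :
    (frameMatrix p).map φ = frameMatrix fun i => mapFactors φ (p i) := by
  ext x f
  simp only [frameMatrix, Matrix.map_apply, map_segre, mapFactors_frame]

namespace IsCertificate

theorem comp {p : ι → Factors a F} {h : BIdx q a → F} {e : ι' → ι} {i₀ : ι'}
    (hp : IsCertificate p h (e i₀)) (he : Function.Injective e) : IsCertificate (p ∘ e) h i₀ where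
  linearIndependent := hp.linearIndependent.comp (Prod.map e id)
    (he.prodMap Function.injective_id)
  dotProduct_frame i := hp.dotProduct_frame (e i)
  det_hessian_ne_zero := hp.det_hessian_ne_zero

/-- Both nondegeneracy conditions are open: they hold at the specialisation `φ`, hence over the
ring `A` itself. -/
theorem exists_lift [Finite ι] {φ : A →+* F} (hφ : Function.Surjective φ) {ψ : A →+* K}
    (hψ : Function.Injective ψ) {p : ι → Factors a A} {h₀ : BIdx q a → F} {i₀ : ι}
    (hp : IsCertificate (fun i => mapFactors φ (p i)) h₀ i₀) :
    ∃ h, IsCertificate (fun i => mapFactors ψ (p i)) h i₀ := by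
  classical
  have := Fintype.ofFinite ι
  have hopen : ∀ x, φ x ≠ 0 → ψ x ≠ 0 := fun x hx hx' =>
    hx (by rw [(map_eq_zero_iff ψ hψ).mp hx', map_zero])
  obtain ⟨B₀, hB₀⟩ := exists_mul_eq_one_of_linearIndependent_row
    (M := (frameMatrix p).map φ) (by rw [map_frameMatrix]; exact hp.linearIndependent)
  obtain ⟨B, rfl⟩ : ∃ B : Matrix _ _ A, B.map φ = B₀ :=
    ⟨B₀.map (Function.surjInv hφ), by ext; exact Function.surjInv_eq hφ _⟩
  rw [← Matrix.map_mul] at hB₀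
  obtain ⟨h, hann, rfl⟩ := exists_lift_mulVec_eq_zero hφ hB₀ (h₀ := h₀) (by
    rw [map_frameMatrix]
    exact funext fun x => (dotProduct_comm _ _).trans (hp.dotProduct_frame x.1 x.2))
  refine ⟨ψ ∘ h, ?_, fun i r => ?_, ?_⟩
  · have hdet : ((frameMatrix p * B).map ψ).det ≠ 0 := by
      rw [← RingHom.mapMatrix_apply, ← RingHom.map_det]
      apply hopen
      rw [RingHom.map_det, RingHom.mapMatrix_apply, hB₀, Matrix.det_one]
      exact one_ne_zero
    rw [Matrix.map_mul, map_frameMatrix] at hdet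
    exact linearIndependent_row_of_det_mul_ne_zero hdet
  · have hψh := congrArg ψ (congrFun hann (i, r))
    rw [RingHom.map_mulVec, map_frameMatrix, Pi.zero_apply, map_zero] at hψh
    exact (dotProduct_comm _ _).trans hψh
  · have hdet := hp.det_hessian_ne_zero
    rw [← map_hessian, ← RingHom.mapMatrix_apply, ← RingHom.map_det] at hdet ⊢
    exact hopen _ hdet

end IsCertificate

end Certificate

section Derivation

variable {q : ℕ} {a : Fin q → ℕ} {K : Type*} [CommRing K]

/-- The derivative of the Segre map at `v`, whose image is the tangent space at `segre v`. -/
abbrev segreDeriv (v : Factors a K) : Factors a K →ₗ[K] (BIdx q a → K) :=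
  (segreMultilinear a K).linearDeriv v

theorem segreDeriv_eq_sum (v u : Factors a K) :
    segreDeriv v u = ∑ j, segre (Function.update v j (u j)) := by
  simp [MultilinearMap.linearDeriv_apply, segreMultilinear_apply]

theorem segreDeriv_single (v : Factors a K) (j : Fin q) (x : Fin (a j + 1) → K) :
    segreDeriv v (Pi.single j x) = segre (Function.update v j x) := by
  rw [segreDeriv_eq_sum, Finset.sum_eq_single j, Pi.single_eq_same]
  · exact fun i _ hij => segre_eq_zero (j := i) (by simp [hij])
  · exact fun h => absurd (Finset.mem_univ j) h

theorem segreDeriv_mem_tangentSpace (v u : Factors a K) : segreDeriv v u ∈ tangentSpace v := by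
  rw [segreDeriv_eq_sum]
  exact Submodule.sum_mem _ fun j _ => segre_update_mem_tangentSpace v j _

theorem derivation_prod {ι : Type*} [DecidableEq ι] (D : Derivation ℤ K K) (s : Finset ι)
    (f : ι → K) : D (∏ i ∈ s, f i) = ∑ i ∈ s, (∏ j ∈ s.erase i, f j) * D (f i) := by
  induction s using Finset.induction_on with
  | empty => simp
  | insert i s hi ih =>
    rw [Finset.prod_insert hi, D.leibniz, ih, Finset.sum_insert hi, Finset.erase_insert hi,
      smul_eq_mul, smul_eq_mul, Finset.mul_sum, add_comm]
    congr 1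
    refine Finset.sum_congr rfl fun j hj => ?_
    rw [Finset.erase_insert_of_ne (ne_of_mem_of_not_mem hj hi).symm,
      Finset.prod_insert (fun h => hi (Finset.mem_of_mem_erase h)), mul_assoc]

theorem derivation_segre (D : Derivation ℤ K K) (v : Factors a K) :
    D ∘ segre v = segreDeriv v (mapFactors D v) := by
  funext f
  simp only [segreDeriv_eq_sum, Function.comp_apply, segre, Finset.sum_apply, derivation_prod]
  refine Finset.sum_congr rfl fun j hj => ?_
  rw [← Finset.prod_erase_mul _ _ hj, Function.update_self]
  congr 1
  exact Finset.prod_congr rfl fun i hi => by rw [Function.update_of_ne (Finset.ne_of_mem_erase hi)]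

/-- Differentiating `h ⬝ᵥ segre v = 0` moves the derivation from the form to the tensor. -/
theorem derivation_comp_dotProduct_segre (D : Derivation ℤ K K) {h : BIdx q a → K}
    {v : Factors a K} (hv : h ⬝ᵥ segre v = 0) :
    (D ∘ h) ⬝ᵥ segre v = -(h ⬝ᵥ segreDeriv v (mapFactors D v)) := by
  have hD := congrArg D hv
  simp only [dotProduct, map_sum, D.leibniz, map_zero, Finset.sum_add_distrib, smul_eq_mul] at hD
  rw [← derivation_segre, eq_neg_iff_add_eq_zero, ← hD, add_comm]
  simp only [dotProduct, Function.comp_apply, mul_comm]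

theorem mapFactors_derivation_setFactor (D : Derivation ℤ K K) (v : Factors a K) (j : Fin q)
    (c : Fin (a j + 1)) :
    mapFactors D (setFactor v j c) = Function.update (mapFactors D v) j 0 := by
  funext i d
  by_cases h : i = j
  · subst h
    by_cases hd : d = c <;> simp [mapFactors, hd]
  · simp [mapFactors, h]

theorem derivation_comp_dotProduct_setFactor_of_eq_zero {D : Derivation ℤ K K}
    {h : BIdx q a → K} {v : Factors a K} (hD : mapFactors D v = 0) {j : Fin q}
    {c : Fin (a j + 1)} (hv : h ⬝ᵥ segre (setFactor v j c) = 0) :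
    (D ∘ h) ⬝ᵥ segre (setFactor v j c) = 0 := by
  rw [derivation_comp_dotProduct_segre D hv, mapFactors_derivation_setFactor, hD,
    Function.update_eq_self_iff.mpr (Pi.zero_apply j).symm, map_zero, dotProduct_zero, neg_zero]

theorem derivation_comp_dotProduct_setFactor_eq_neg_hessian {D : Derivation ℤ K K}
    {h : BIdx q a → K} {v : Factors a K} {x y : Σ j, Fin (a j)}
    (hD : mapFactors D v = Pi.single y.1 (Pi.single y.2.succ 1))
    (hv : h ⬝ᵥ segre (setFactor v x.1 x.2.succ) = 0) :
    (D ∘ h) ⬝ᵥ segre (setFactor v x.1 x.2.succ) = -hessian h v x y := by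
  rw [derivation_comp_dotProduct_segre D hv, mapFactors_derivation_setFactor, hD, hessian]
  obtain ⟨i, c⟩ := x
  obtain ⟨j, d⟩ := y
  split_ifs with hxy
  · obtain rfl : i = j := hxy
    rw [Pi.single, Function.update_idem, Function.update_eq_self_iff.mpr (Pi.zero_apply i).symm,
      map_zero, dotProduct_zero]
  · rw [Function.update_eq_self_iff.mpr (Pi.single_eq_of_ne hxy _).symm, segreDeriv_single]

end Derivation

section WeakDefectivity

variable {q : ℕ} {a : Fin q → ℕ} {ι K : Type*} [Field K]

theorem dotProduct_eq_zero_of_mem_span {κ : Type*} [Fintype κ] {s : Set (κ → K)} {h y : κ → K}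
    (hs : ∀ x ∈ s, h ⬝ᵥ x = 0) (hy : y ∈ Submodule.span K s) : h ⬝ᵥ y = 0 := by
  suffices Submodule.span K s ≤ LinearMap.ker (dotProductBilin K K h) from this hy
  exact Submodule.span_le.mpr hs

/-- The coordinates of the points `p i` behave like independent variables: the field `K` carries
a partial derivative with respect to each of them. -/
def HasPartialDerivations (p : ι → Factors a K) : Prop :=
  ∀ i j c, ∃ D : Derivation ℤ K K,
    mapFactors D (p i) = Pi.single j (Pi.single c 1) ∧ ∀ i' ≠ i, mapFactors D (p i') = 0

theorem HasPartialDerivations.of_algebra {𝕜 : Type*} [CommRing 𝕜] [Algebra 𝕜 K]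
    {p : ι → Factors a K} (h : ∀ i j c, ∃ D : Derivation 𝕜 K K,
      mapFactors D (p i) = Pi.single j (Pi.single c 1) ∧ ∀ i' ≠ i, mapFactors D (p i') = 0) :
    HasPartialDerivations p := fun i j c =>
  let ⟨D, hD⟩ := h i j c
  ⟨D.restrictScalars ℤ, hD⟩

theorem HasPartialDerivations.apply_ne_zero {p : ι → Factors a K} (hp : HasPartialDerivations p)
    (i : ι) (j : Fin q) (c : Fin (a j + 1)) : p i j c ≠ 0 := by
  obtain ⟨D, hD, -⟩ := hp i j c
  have hDp : D (p i j c) = 1 := by simpa using congrFun (congrFun hD j) c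
  intro h
  simp [h] at hDp

theorem IsCertificate.dotProduct_eq_zero [NeZero q] {p : ι → Factors a K} {h : BIdx q a → K}
    {i₀ : ι} (hc : IsCertificate p h i₀) (hp : HasPartialDerivations p) {y : BIdx q a → K}
    (hy : y ∈ ⨆ i, tangentSpace (p i)) : h ⬝ᵥ y = 0 := by
  rw [iSup_tangentSpace_eq_span_frame (c := 0) fun i j => hp.apply_ne_zero i j 0] at hy
  refine dotProduct_eq_zero_of_mem_span ?_ hy
  rintro _ ⟨x, rfl⟩
  exact hc.dotProduct_frame x.1 x.2

/-- The functional `D ∘ h` annihilates every tangent space inside `⨆ i, tangentSpace (p i)`, and it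
pairs with the frame at `p i` through the Hessian. Nondegeneracy thus forces the tangential
components of `segre w` to vanish. -/
theorem IsCertificate.coeff_eq_zero [NeZero q] [Fintype ι] {p : ι → Factors a K}
    {h : BIdx q a → K} {i : ι} (hc : IsCertificate p h i) (hp : HasPartialDerivations p)
    {w : Factors a K} (hw : tangentSpace w ≤ ⨆ i, tangentSpace (p i))
    {β : ι × Option (Σ j, Fin (a j)) → K} (hβ : ∑ x, β x • segre (frame 0 (p x.1) x.2) = segre w)
    (x : Σ j, Fin (a j)) : β (i, some x) = 0 := by
  suffices Matrix.vecMul (fun x => β (i, some x)) (hessian h (p i)) = 0 from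
    congrFun (Matrix.eq_zero_of_vecMul_eq_zero hc.det_hessian_ne_zero this) x
  funext y
  obtain ⟨D, hDi, hD⟩ := hp i y.1 y.2.succ
  have htangent : ∀ v : Factors a K, tangentSpace v ≤ ⨆ i, tangentSpace (p i) →
      (D ∘ h) ⬝ᵥ segre v = 0 := fun v hv => by
    rw [derivation_comp_dotProduct_segre D
        (hc.dotProduct_eq_zero hp (hv (segre_mem_tangentSpace v))),
      hc.dotProduct_eq_zero hp (hv (segreDeriv_mem_tangentSpace v _)), neg_zero]
  have hother : ∀ i' ≠ i, ∀ r, (D ∘ h) ⬝ᵥ segre (frame 0 (p i') r) = 0 := by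
    rintro i' hi' (_ | x)
    · exact htangent _ (le_iSup (fun i => tangentSpace (p i)) i')
    · exact derivation_comp_dotProduct_setFactor_of_eq_zero (hD i' hi')
        (hc.dotProduct_frame i' (some x))
  have hsome : ∀ x, (D ∘ h) ⬝ᵥ segre (frame 0 (p i) (some x)) = -hessian h (p i) x y := fun x =>
    derivation_comp_dotProduct_setFactor_eq_neg_hessian hDi (hc.dotProduct_frame i (some x))
  have hnone : (D ∘ h) ⬝ᵥ segre (frame 0 (p i) none) = 0 :=
    htangent _ (le_iSup (fun i => tangentSpace (p i)) i)
  have hsum : ∑ r, β (i, r) * ((D ∘ h) ⬝ᵥ segre (frame 0 (p i) r)) = 0 := by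
    rw [← htangent w hw, ← hβ, dotProduct_sum, Fintype.sum_prod_type]
    simp only [dotProduct_smul, smul_eq_mul]
    rw [Fintype.sum_eq_single i]
    exact fun i' hi' => Finset.sum_eq_zero fun r _ => by rw [hother i' hi', mul_zero]
  change ∑ x, β (i, some x) * hessian h (p i) x y = 0
  simpa only [Fintype.sum_option, hnone, hsome, mul_zero, zero_add, mul_neg,
    Finset.sum_neg_distrib, neg_eq_zero] using hsum

/-- Tangential weak nondefectivity at a generic point. -/
theorem segre_mem_span_of_tangentSpace_le [NeZero q] [Finite ι] {p : ι → Factors a K}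
    (hp : HasPartialDerivations p) (hc : ∀ i, ∃ h, IsCertificate p h i) {w : Factors a K}
    (hw : tangentSpace w ≤ ⨆ i, tangentSpace (p i)) :
    segre w ∈ Submodule.span K (Set.range fun i => segre (p i)) := by
  have := Fintype.ofFinite ι
  have hmem := hw (segre_mem_tangentSpace w)
  rw [iSup_tangentSpace_eq_span_frame (c := 0) fun i j => hp.apply_ne_zero i j 0,
    Submodule.mem_span_range_iff_exists_fun] at hmem
  obtain ⟨β, hβ⟩ := hmem
  refine Submodule.mem_span_range_iff_exists_fun K |>.mpr ⟨fun i => β (i, none), ?_⟩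
  rw [← hβ, Fintype.sum_prod_type]
  refine Finset.sum_congr rfl fun i _ => ?_
  obtain ⟨h, hh⟩ := hc i
  simp [Fintype.sum_option, hh.coeff_eq_zero hp hw hβ, frame]

/-- Differentiating the identity between the sums recovers each tangent vector at `p i` as a sum of
tangent vectors at the points of the other decomposition. -/
theorem iSup_tangentSpace_le_of_sum_segre_eq {ι' : Type*} [Fintype ι] [Fintype ι']
    {p : ι → Factors a K} (hp : HasPartialDerivations p) {s : ι' → Factors a K}
    (hs : ∑ i, segre (s i) = ∑ i, segre (p i)) :
    ⨆ i, tangentSpace (p i) ≤ ⨆ i, tangentSpace (s i) := by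
  refine iSup_le fun i => tangentSpace_le_iff.mpr fun j c => ?_
  obtain ⟨D, hDi, hD⟩ := hp i j c
  have hsum : ∑ i, segreDeriv (s i) (mapFactors D (s i)) =
      ∑ i, segreDeriv (p i) (mapFactors D (p i)) := by
    simp only [← derivation_segre]
    funext f
    simpa using congrArg D (congrFun hs f)
  rw [Fintype.sum_eq_single i fun i' hi' => by rw [hD i' hi', map_zero], hDi,
    segreDeriv_single] at hsum
  rw [← hsum]
  exact Submodule.sum_mem _ fun i' _ =>
    le_iSup (fun i => tangentSpace (s i)) i' (segreDeriv_mem_tangentSpace _ _)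

theorem segre_mem_span_of_sum_segre_eq [NeZero q] [Fintype ι] {p : ι → Factors a K}
    (hp : HasPartialDerivations p) (hc : ∀ i, ∃ h, IsCertificate p h i) {s : ι → Factors a K}
    (hs : ∑ i, segre (s i) = ∑ i, segre (p i)) (i : ι) :
    segre (s i) ∈ Submodule.span K (Set.range fun i => segre (p i)) := by
  obtain ⟨h, hh⟩ := hc i
  have hrank := finrank_iSup_tangentSpace_eq (c := 0) (fun i j => hp.apply_ne_zero i j 0)
    hh.linearIndependent
  have heq := Submodule.eq_of_le_of_finrank_le (iSup_tangentSpace_le_of_sum_segre_eq hp hs)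
    ((finrank_iSup_tangentSpace_le s).trans hrank.ge)
  exact segre_mem_span_of_tangentSpace_le hp hc
    (heq ▸ le_iSup (fun i => tangentSpace (s i)) i)

end WeakDefectivity

section GenericPoint

open MvPolynomial

/-- The filter of properties of `p : σ → 𝕜` which hold off the zero set of a nonzero polynomial,
that is, for general `p`. -/
def zariskiGeneric (σ 𝕜 : Type*) [Field 𝕜] : Filter (σ → 𝕜) where
  sets := {s | ∃ F : MvPolynomial σ 𝕜, F ≠ 0 ∧ ∀ p, eval p F ≠ 0 → p ∈ s}
  univ_sets := ⟨1, one_ne_zero, fun _ _ => Set.mem_univ _⟩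
  sets_of_superset := fun ⟨F, hF, h⟩ hst => ⟨F, hF, fun p hp => hst (h p hp)⟩
  inter_sets := fun ⟨F, hF, hs⟩ ⟨G, hG, ht⟩ => ⟨F * G, mul_ne_zero hF hG, fun p hp => by
    rw [map_mul, mul_ne_zero_iff] at hp
    exact ⟨hs p hp.1, ht p hp.2⟩⟩

theorem eventually_zariskiGeneric_iff {σ 𝕜 : Type*} [Field 𝕜] {P : (σ → 𝕜) → Prop} :
    (∀ᶠ p in zariskiGeneric σ 𝕜, P p) ↔
      ∃ F : MvPolynomial σ 𝕜, F ≠ 0 ∧ ∀ p, eval p F ≠ 0 → P p :=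
  Iff.rfl

/-- An algebraic closure of the field of rational functions in the variables `σ`. It contains the
coordinates of the generic point of the affine space `σ → 𝕜`. -/
abbrev GenericField (σ 𝕜 : Type*) [Field 𝕜] : Type _ :=
  AlgebraicClosure (FractionRing (MvPolynomial σ 𝕜))

theorem algebraMap_genericField_injective (σ 𝕜 : Type*) [Field 𝕜] :
    Function.Injective (algebraMap (MvPolynomial σ 𝕜) (GenericField σ 𝕜)) :=
  (algebraMap (FractionRing (MvPolynomial σ 𝕜)) (GenericField σ 𝕜)).injective.comp
    (IsFractionRing.injective (MvPolynomial σ 𝕜) _)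

theorem exists_derivation_genericField {σ 𝕜 : Type*} [Field 𝕜] [CharZero 𝕜] [DecidableEq σ]
    (x : σ) : ∃ D : Derivation 𝕜 (GenericField σ 𝕜) (GenericField σ 𝕜),
      ∀ y, D (algebraMap (MvPolynomial σ 𝕜) _ (X y)) =
        (Pi.single x 1 : σ → GenericField σ 𝕜) y := by
  let A := MvPolynomial σ 𝕜
  let L := GenericField σ 𝕜
  have : Algebra.FormallyEtale A (FractionRing A) :=
    Algebra.FormallyEtale.of_isLocalization (nonZeroDivisors A)
  have : Algebra.FormallyEtale (FractionRing A) L := Algebra.FormallyEtale.of_isSeparable _ _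
  have : Algebra.FormallyEtale A L := Algebra.FormallyEtale.comp _ (FractionRing A) _
  let d : Derivation 𝕜 A L := (Algebra.linearMap A L).compDer (pderiv x)
  let D : Derivation 𝕜 L L := ((d.liftKaehlerDifferential.liftBaseChange L) ∘ₗ
    (KaehlerDifferential.tensorKaehlerEquivOfFormallyEtale 𝕜 A L).symm.toLinearMap).compDer
      (KaehlerDifferential.D 𝕜 L)
  have hD : ∀ f : A, D (algebraMap A L f) = d f := fun f => by
    have htensor : (KaehlerDifferential.tensorKaehlerEquivOfFormallyEtale 𝕜 A L).symm
        (KaehlerDifferential.D 𝕜 L (algebraMap A L f)) = 1 ⊗ₜ KaehlerDifferential.D 𝕜 A f :=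
      KaehlerDifferential.tensorKaehlerEquivOfFormallyEtale_symm_D_algebraMap 𝕜 A L f
    refine (congrArg (d.liftKaehlerDifferential.liftBaseChange L) htensor).trans ?_
    rw [LinearMap.liftBaseChange_tmul, one_smul, Derivation.liftKaehlerDifferential_comp_D]
  refine ⟨D, fun y => (hD _).trans ?_⟩
  change algebraMap A L (pderiv x (X y)) = _
  simp only [pderiv_X, Pi.single_apply, apply_ite (algebraMap A L), map_one, map_zero]

end GenericPoint

section Elimination

open MvPolynomial

variable {σ τ 𝕜 : Type*} [Field 𝕜]

/-- A system of polynomial equations without solutions over the generic point has none over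
general points: by the Nullstellensatz, `1` is a combination of the equations over the field of
rational functions, and one clears denominators. -/
theorem eventually_not_exists_solution [Finite τ] {ρ : Type*}
    (S : ρ → MvPolynomial τ (MvPolynomial σ 𝕜))
    (hS : ¬ ∃ y : τ → GenericField σ 𝕜, ∀ r, eval₂Hom (algebraMap _ _) y (S r) = 0) :
    ∀ᶠ p in zariskiGeneric σ 𝕜, ¬ ∃ y : τ → 𝕜, ∀ r, eval₂Hom (eval p) y (S r) = 0 := by
  let K := FractionRing (MvPolynomial σ 𝕜)
  let _ : Algebra (MvPolynomial τ (MvPolynomial σ 𝕜)) (MvPolynomial τ K) := algebraMvPolynomial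
  let φ := algebraMap (MvPolynomial τ (MvPolynomial σ 𝕜)) (MvPolynomial τ K)
  have hφ : ∀ (y : τ → GenericField σ 𝕜) f, aeval y (φ f) = aeval y f := fun y f => by
    simp only [φ, MvPolynomial.algebraMap_def, aeval_map_algebraMap]
  have htop : (Ideal.span (Set.range S)).map φ = ⊤ := by
    rw [← Ideal.radical_eq_top, ← vanishingIdeal_zeroLocus_eq_radical (K := GenericField σ 𝕜),
      Ideal.map_span, zeroLocus_span]
    convert vanishingIdeal_empty
    refine Set.eq_empty_of_forall_notMem fun y hy => hS ⟨y, fun r => ?_⟩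
    exact (hφ y (S r)).symm.trans (hy _ ⟨S r, ⟨r, rfl⟩, rfl⟩)
  have hdisjoint := (IsLocalization.map_algebraMap_ne_top_iff_disjoint
    ((nonZeroDivisors (MvPolynomial σ 𝕜)).map (C (σ := τ))) (MvPolynomial τ K)
    (Ideal.span (Set.range S))).not.mp (not_not.mpr htop)
  obtain ⟨_, ⟨F, hF, rfl⟩, hmem⟩ := Set.not_disjoint_iff.mp hdisjoint
  refine ⟨F, nonZeroDivisors.ne_zero hF, fun p hp ⟨y, hy⟩ => hp ?_⟩
  have hle : Ideal.span (Set.range S) ≤ RingHom.ker (eval₂Hom (eval p) y) :=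
    Ideal.span_le.mpr (Set.range_subset_iff.mpr hy)
  simpa using hle hmem

theorem notMem_span_iff_exists_dotProduct {ι κ L : Type*} [Fintype κ] [Field L] {x : κ → L}
    {g : ι → κ → L} : x ∉ Submodule.span L (Set.range g) ↔
      ∃ l : κ → L, (∀ i, l ⬝ᵥ g i = 0) ∧ l ⬝ᵥ x = 1 := by
  classical
  refine ⟨fun hx => ?_, fun ⟨l, hl, hlx⟩ hx => ?_⟩
  · obtain ⟨f, hfx, hf⟩ := Submodule.exists_le_ker_of_notMem hx
    have hdot : ∀ y, (fun j => f (Pi.single j 1)) ⬝ᵥ y = f y := fun y => by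
      conv_rhs => rw [pi_eq_sum_univ' y, map_sum]
      simp [dotProduct, mul_comm]
    refine ⟨(f x)⁻¹ • fun j => f (Pi.single j 1), fun i => ?_, ?_⟩
    · rw [smul_dotProduct, hdot, show f (g i) = 0 from hf (Submodule.subset_span ⟨i, rfl⟩),
        smul_zero]
    · rw [smul_dotProduct, hdot, smul_eq_mul, inv_mul_cancel₀ hfx]
  · have hlx0 := dotProduct_eq_zero_of_mem_span (Set.forall_mem_range.mpr hl) hx
    exact zero_ne_one (hlx0.symm.trans hlx)

section SpanSystem

variable {A α ι ι' κ : Type*} [CommRing A] [Fintype ι] [Fintype κ]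

/-- Polynomial equations expressing that every `u s` lies in the span of the `g i`, while `x` does
not lie in the span of the `g' i`. The additional unknowns are the coefficients of the `u s` and a
linear form which vanishes on the `g' i` but not on `x`. -/
def spanSystem (u : α → κ → MvPolynomial τ A) (g : ι → κ → MvPolynomial τ A)
    (g' : ι' → κ → MvPolynomial τ A) (x : κ → MvPolynomial τ A) :
    (α × κ) ⊕ ι' ⊕ Unit → MvPolynomial (τ ⊕ (α × ι) ⊕ κ) A :=
  Sum.elim
    (fun s => ∑ i, X (.inr (.inl (s.1, i))) * rename .inl (g i s.2) - rename .inl (u s.1 s.2))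
    (Sum.elim (fun i => ∑ f, X (.inr (.inr f)) * rename .inl (g' i f))
      fun _ => ∑ f, X (.inr (.inr f)) * rename .inl (x f) - 1)

theorem exists_solution_spanSystem_iff {L : Type*} [Field L] (χ : A →+* L)
    {u : α → κ → MvPolynomial τ A} {g : ι → κ → MvPolynomial τ A}
    {g' : ι' → κ → MvPolynomial τ A} {x : κ → MvPolynomial τ A} :
    (∃ y, ∀ r, eval₂Hom χ y (spanSystem u g g' x r) = 0) ↔
      ∃ y, (∀ s, eval₂Hom χ y ∘ u s ∈
          Submodule.span L (Set.range fun i => eval₂Hom χ y ∘ g i)) ∧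
        eval₂Hom χ y ∘ x ∉ Submodule.span L (Set.range fun i => eval₂Hom χ y ∘ g' i) := by
  have hsystem : ∀ y b l, (∀ r, eval₂Hom χ (Sum.elim y (Sum.elim b l))
      (spanSystem u g g' x r) = 0) ↔
        (∀ s, ∑ i, b (s, i) • (eval₂Hom χ y ∘ g i) = eval₂Hom χ y ∘ u s) ∧
          (∀ i, l ⬝ᵥ (eval₂Hom χ y ∘ g' i) = 0) ∧ l ⬝ᵥ (eval₂Hom χ y ∘ x) = 1 := by
    intro y b l
    simp [spanSystem, dotProduct, sub_eq_zero, funext_iff, eval₂_rename, Function.comp_def]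
  simp only [notMem_span_iff_exists_dotProduct, Submodule.mem_span_range_iff_exists_fun]
  constructor
  · rintro ⟨y, hy⟩
    rw [← Sum.elim_comp_inl_inr y, ← Sum.elim_comp_inl_inr (y ∘ Sum.inr), hsystem] at hy
    exact ⟨_, fun s => ⟨_, hy.1 s⟩, _, hy.2⟩
  · rintro ⟨y, hu, l, hl⟩
    choose b hb using hu
    exact ⟨_, (hsystem y (fun s => b s.1 s.2) l).mpr ⟨hb, hl⟩⟩

end SpanSystem

/-- Implications between memberships in spans transfer from the generic point to general points. -/
theorem eventually_mem_span {α ι ι' κ : Type*} [Finite τ] [Finite α] [Finite ι] [Finite κ]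
    (u : α → κ → MvPolynomial τ (MvPolynomial σ 𝕜))
    (g : ι → κ → MvPolynomial τ (MvPolynomial σ 𝕜))
    (g' : ι' → κ → MvPolynomial τ (MvPolynomial σ 𝕜))
    (x : κ → MvPolynomial τ (MvPolynomial σ 𝕜))
    (hgeneric : ∀ y : τ → GenericField σ 𝕜,
      let θ := eval₂Hom (algebraMap _ (GenericField σ 𝕜)) y
      (∀ s, θ ∘ u s ∈ Submodule.span (GenericField σ 𝕜) (Set.range fun i => θ ∘ g i)) →
        θ ∘ x ∈ Submodule.span (GenericField σ 𝕜) (Set.range fun i => θ ∘ g' i)) :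
    ∀ᶠ p in zariskiGeneric σ 𝕜, ∀ y : τ → 𝕜,
      let θ := eval₂Hom (eval p) y
      (∀ s, θ ∘ u s ∈ Submodule.span 𝕜 (Set.range fun i => θ ∘ g i)) →
        θ ∘ x ∈ Submodule.span 𝕜 (Set.range fun i => θ ∘ g' i) := by
  have := Fintype.ofFinite ι
  have := Fintype.ofFinite κ
  have hgeneric' := mt (exists_solution_spanSystem_iff (algebraMap _ (GenericField σ 𝕜))).mp
    fun ⟨y, hu, hx⟩ => hx (hgeneric y hu)
  filter_upwards [eventually_not_exists_solution _ hgeneric'] with p hp y θ hu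
  by_contra hx
  exact hp ((exists_solution_spanSystem_iff (eval p)).mpr ⟨y, hu, hx⟩)

theorem eventually_linearIndependent {ι κ : Type*} [Finite ι] {v : ι → κ → MvPolynomial σ 𝕜}
    (hv : LinearIndependent (GenericField σ 𝕜) fun i => algebraMap _ (GenericField σ 𝕜) ∘ v i) :
    ∀ᶠ p in zariskiGeneric σ 𝕜, LinearIndependent 𝕜 fun i => eval p ∘ v i := by
  have := Fintype.ofFinite ι
  let S (i : ι) : Option κ → MvPolynomial ι (MvPolynomial σ 𝕜) := fun r =>
    r.elim (X i - 1) fun f => ∑ i, X i * C (v i f)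
  have hgeneric : ∀ i, ∀ᶠ p in zariskiGeneric σ 𝕜, ¬ ∃ y, ∀ r, eval₂Hom (eval p) y (S i r) = 0 :=
    fun i => eventually_not_exists_solution _ fun ⟨y, hy⟩ => by
      simp only [S, Option.forall, Option.elim_none, Option.elim_some, map_sub, map_sum, map_mul,
        map_one, eval₂Hom_X', eval₂Hom_C, sub_eq_zero] at hy
      exact one_ne_zero (hy.1.symm.trans (Fintype.linearIndependent_iff.mp hv y
        (by simpa [_root_.funext_iff] using hy.2) i))
  filter_upwards [Filter.eventually_all.mpr hgeneric] with p hp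
  refine Fintype.linearIndependent_iff.mpr fun y hy i => ?_
  by_contra hyi
  refine hp i ⟨(y i)⁻¹ • y, Option.forall.mpr ⟨by simp [S, hyi], fun f => ?_⟩⟩
  have hyf := congrFun hy f
  simp only [Finset.sum_apply, Pi.smul_apply, Function.comp_apply, smul_eq_mul,
    Pi.zero_apply] at hyf
  simp [S, mul_assoc, ← Finset.mul_sum, hyf]

end Elimination

section GeneralPoints

open MvPolynomial

variable {q : ℕ} {a : Fin q → ℕ} {k : ℕ} {R 𝕜 : Type*} [CommRing R] [Field 𝕜]

/-- The points of `(K^{a₁+1} × ⋯ × K^{a_q+1})^k` as families of `k` factor tuples. -/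
abbrev toPoints (x : WIdx q a k → R) : Fin k → Factors a R := fun i j c => x (i, ⟨j, c⟩)

theorem mapFactors_toPoints {S : Type*} [CommRing S] (φ : R →+* S) (x : WIdx q a k → R)
    (i : Fin k) : mapFactors φ (toPoints x i) = toPoints (fun z => φ (x z)) i :=
  rfl

/-- `k` generic points, whose coordinates are independent variables. -/
def genericFactors (a : Fin q → ℕ) (k : ℕ) (𝕜 : Type*) [Field 𝕜] :
    Fin k → Factors a (GenericField (WIdx q a k) 𝕜) :=
  toPoints fun x => algebraMap (MvPolynomial (WIdx q a k) 𝕜) _ (X x)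

theorem hasPartialDerivations_genericFactors [CharZero 𝕜] :
    HasPartialDerivations (genericFactors a k 𝕜) := by
  refine .of_algebra (𝕜 := 𝕜) fun i j c => ?_
  obtain ⟨D, hD⟩ := exists_derivation_genericField (𝕜 := 𝕜) ((i, ⟨j, c⟩) : WIdx q a k)
  refine ⟨D, ?_, fun i' hi' => ?_⟩
  · funext j' c'
    refine (hD _).trans ?_
    by_cases hj : j' = j
    · subst hj
      simp [Pi.single_apply]
    · simp [hj]
  · funext j' c'
    refine (hD _).trans (Pi.single_eq_of_ne ?_ _)
    exact fun h => hi' (congrArg Prod.fst h)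

/-- One certificate suffices, since the points can be permuted. -/
theorem IsCertificate.exists_genericFactors [CharZero 𝕜] {ℓ : ℕ} [Fact ℓ.Prime]
    {p : Fin k → Factors a (ZMod ℓ)} {h₀ : BIdx q a → ZMod ℓ} {i₀ : Fin k}
    (hp : IsCertificate p h₀ i₀) (i : Fin k) :
    ∃ h, IsCertificate (genericFactors a k 𝕜) h i := by
  let e := Equiv.swap i i₀
  have hpe : IsCertificate (p ∘ e) h₀ i :=
    comp (by rwa [Equiv.swap_apply_left]) e.injective
  let φ : MvPolynomial (WIdx q a k) ℤ →+* ZMod ℓ :=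
    eval₂Hom (Int.castRingHom (ZMod ℓ)) fun x => p (e x.1) x.2.1 x.2.2
  have hφ : Function.Surjective φ := fun z => by
    obtain ⟨m, rfl⟩ := ZMod.intCast_surjective z
    exact ⟨C m, eval₂Hom_C _ _ _⟩
  have hpoints : (fun i => mapFactors φ (toPoints X i)) = p ∘ e := by
    funext i j c
    exact eval₂Hom_X' _ _ _
  have hψ := (algebraMap_genericField_injective (WIdx q a k) 𝕜).comp
    (map_injective (Int.castRingHom 𝕜) Int.cast_injective)
  rw [← hpoints] at hpe
  obtain ⟨h, hh⟩ := hpe.exists_lift (ψ := (algebraMap _ _).comp (map (Int.castRingHom 𝕜))) hφ hψ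
  have hpoint : ∀ i, mapFactors ((algebraMap _ _).comp (map (Int.castRingHom 𝕜))) (toPoints X i) =
      genericFactors a k 𝕜 i := fun i => by
    funext j c
    simp [genericFactors]
  exact ⟨h, by simpa only [hpoint] using hh⟩

theorem IsCertificate.eventually_linearIndependent_frame {h : BIdx q a → GenericField _ 𝕜}
    {i : Fin k} (hc : IsCertificate (genericFactors a k 𝕜) h i) :
    ∀ᶠ p in zariskiGeneric (WIdx q a k) 𝕜, LinearIndependent 𝕜
      fun x : Fin k × Option (Σ j, Fin (a j)) => segre (frame 0 (toPoints p x.1) x.2) := by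
  have := eventually_linearIndependent (v := frameMatrix (toPoints X)) (by
    simp only [frameMatrix, comp_segre, mapFactors_frame]
    exact hc.linearIndependent)
  simpa only [frameMatrix, comp_segre, mapFactors_frame, mapFactors_toPoints, eval_X] using this

theorem eventually_segre_mem_span_of_tangentSpace_le [NeZero q] [CharZero 𝕜]
    (hc : ∀ i, ∃ h, IsCertificate (genericFactors a k 𝕜) h i) :
    ∀ᶠ p in zariskiGeneric (WIdx q a k) 𝕜, ∀ w : Factors a 𝕜,
      tangentSpace w ≤ ⨆ i, tangentSpace (toPoints p i) →
        segre w ∈ Submodule.span 𝕜 (Set.range fun i => segre (toPoints p i)) := by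
  let P := MvPolynomial (Σ j, Fin (a j + 1)) (MvPolynomial (WIdx q a k) 𝕜)
  let w : Factors a P := fun j c => X ⟨j, c⟩
  let t : Fin k → Factors a P := toPoints fun x => C (X x)
  have htransfer := eventually_mem_span
    (fun x : Σ j, Fin (a j + 1) => segre (setFactor w x.1 x.2))
    (fun x : WIdx q a k => segre (setFactor (t x.1) x.2.1 x.2.2)) (fun i => segre (t i)) (segre w)
    fun y => by
      simp only [comp_segre, mapFactors_setFactor, ← iSup_tangentSpace_eq_span, Sigma.forall,
        ← tangentSpace_le_iff, t, mapFactors_toPoints, eval₂Hom_C]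
      exact segre_mem_span_of_tangentSpace_le hasPartialDerivations_genericFactors hc
  filter_upwards [htransfer] with p hp v
  have hw : mapFactors (eval₂Hom (eval p) fun x => v x.1 x.2) w = v := by
    funext j c
    exact eval₂Hom_X' _ _ _
  simpa only [comp_segre, mapFactors_setFactor, ← iSup_tangentSpace_eq_span, Sigma.forall,
    ← tangentSpace_le_iff, t, mapFactors_toPoints, eval₂Hom_C, eval_X, hw] using
    hp fun x => v x.1 x.2

theorem eventually_segre_mem_span_of_sum_segre_eq [NeZero q] [CharZero 𝕜]
    (hc : ∀ i, ∃ h, IsCertificate (genericFactors a k 𝕜) h i) :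
    ∀ᶠ p in zariskiGeneric (WIdx q a k) 𝕜, ∀ s : Fin k → Factors a 𝕜,
      ∑ i, segre (s i) = ∑ i, segre (toPoints p i) →
        ∀ i, segre (s i) ∈ Submodule.span 𝕜 (Set.range fun i => segre (toPoints p i)) := by
  let P := MvPolynomial (WIdx q a k) (MvPolynomial (WIdx q a k) 𝕜)
  let s : Fin k → Factors a P := toPoints X
  let t : Fin k → Factors a P := toPoints fun x => C (X x)
  have htransfer := fun i => eventually_mem_span
    (fun _ : Unit => ∑ i, segre (s i) - ∑ i, segre (t i)) Empty.elim (fun i => segre (t i))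
    (segre (s i)) fun y => by
      simp only [Set.range_eq_empty, Submodule.span_empty, Submodule.mem_bot, comp_sum_segre_sub,
        comp_segre, sub_eq_zero, forall_const, t, mapFactors_toPoints, eval₂Hom_C]
      exact fun hs => segre_mem_span_of_sum_segre_eq hasPartialDerivations_genericFactors hc hs i
  filter_upwards [Filter.eventually_all.mpr htransfer] with p hp v hv i
  have hpi := hp i fun x => v x.1 x.2.1 x.2.2
  simp only [Set.range_eq_empty, Submodule.span_empty, Submodule.mem_bot, comp_sum_segre_sub,
    comp_segre, sub_eq_zero, forall_const, s, t, mapFactors_toPoints, eval₂Hom_C, eval₂Hom_X',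
    eval_X] at hpi
  exact hpi hv

end GeneralPoints

section Uniqueness

variable {q : ℕ} {a : Fin q → ℕ} {ι K : Type*} [Field K]

/-- The endomorphism of the space of tensors which is induced by the matrix `M` acting on the
`j`-th factor. -/
def mulFactor (j : Fin q) (M : Matrix (Fin (a j + 1)) (Fin (a j + 1)) K) :
    (BIdx q a → K) →ₗ[K] BIdx q a → K :=
  LinearMap.pi fun f => ∑ d, M (f j) d • LinearMap.proj (Function.update f j d)

theorem mulFactor_segre (j : Fin q) (M : Matrix (Fin (a j + 1)) (Fin (a j + 1)) K)
    (v : Factors a K) : mulFactor j M (segre v) = segre (Function.update v j (M.mulVec (v j))) := by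
  funext f
  have hsegre : ∀ u d, segre (Function.update v j u) (Function.update f j d) =
      u d * ∏ i ∈ Finset.univ.erase j, v i (f i) := fun u d => by
    rw [segre, ← Finset.mul_prod_erase _ _ (Finset.mem_univ j), Function.update_self,
      Function.update_self]
    congr 1
    exact Finset.prod_congr rfl fun i hi => by
      rw [Function.update_of_ne (Finset.ne_of_mem_erase hi),
        Function.update_of_ne (Finset.ne_of_mem_erase hi)]
  have hleft : ∀ d, segre v (Function.update f j d) =
      v j d * ∏ i ∈ Finset.univ.erase j, v i (f i) := fun d => by
    rw [← hsegre, Function.update_eq_self]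
  have hright := hsegre (M.mulVec (v j)) (f j)
  rw [Function.update_eq_self] at hright
  rw [hright, Matrix.mulVec, dotProduct, Finset.sum_mul]
  simp [mulFactor, hleft, mul_assoc]

theorem segre_ne_zero {v : Factors a K} (hv : ∀ j, v j ≠ 0) : segre v ≠ 0 := by
  choose f hf using fun j => Function.ne_iff.mp (hv j)
  exact Function.ne_iff.mpr ⟨f, Finset.prod_ne_zero_iff.mpr fun j _ => hf j⟩

theorem exists_segre_eq_smul_of_forall_exists_smul {v w : Factors a K} (hv : ∀ j, v j ≠ 0)
    (h : ∀ j, ∃ t : K, t • w j = v j) : ∃ t : K, segre w = t • segre v := by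
  choose t ht using h
  have ht0 : ∏ j, t j ≠ 0 := Finset.prod_ne_zero_iff.mpr fun j _ htj => hv j (by
    rw [← ht, htj, zero_smul])
  refine ⟨(∏ j, t j)⁻¹, ?_⟩
  rw [eq_inv_smul_iff₀ ht0, ← segreMultilinear_apply, ← MultilinearMap.map_smul_univ,
    segreMultilinear_apply]
  exact congrArg segre (funext ht)

/-- If `w j` is not proportional to `p i j`, some linear form on the `j`-th factor kills `w j` but
not `p i j`; contracting a relation with it leaves one between tangent vectors. -/
theorem exists_segre_eq_smul_of_mem_span [∀ j, NeZero (a j)] [Finite ι] {p : ι → Factors a K}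
    {c : BIdx q a} (hp : ∀ i j, p i j ≠ 0) (hli : LinearIndependent K
      fun x : ι × Option (Σ j, Fin (a j)) => segre (frame c (p x.1) x.2))
    {w : Factors a K} (hw : ∀ j, w j ≠ 0)
    (hmem : segre w ∈ Submodule.span K (Set.range fun i => segre (p i))) :
    ∃ i, ∃ t : K, segre w = t • segre (p i) := by
  have := Fintype.ofFinite ι
  obtain ⟨b, hb⟩ := (Submodule.mem_span_range_iff_exists_fun K).mp hmem
  obtain ⟨i, hi⟩ : ∃ i, b i ≠ 0 := by
    by_contra! h
    exact segre_ne_zero hw (by simp [← hb, h])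
  refine ⟨i, exists_segre_eq_smul_of_forall_exists_smul (hp i) fun j => ?_⟩
  by_contra hj
  have hnotMem : p i j ∉ Submodule.span K (Set.range fun _ : Unit => w j) := by
    rwa [Set.range_const, Submodule.mem_span_singleton]
  obtain ⟨φ, hφw, hφp⟩ := notMem_span_iff_exists_dotProduct.mp hnotMem
  let d := (c j).succAbove 0
  have hcontract : ∀ v : Factors a K, mulFactor j (Matrix.vecMulVec (Pi.single d 1) φ) (segre v) =
      (φ ⬝ᵥ v j) • segre (setFactor v j d) := fun v => by
    rw [mulFactor_segre, Matrix.vecMulVec_mulVec, ← segreMultilinear_apply, op_smul_eq_smul,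
      MultilinearMap.map_update_smul, segreMultilinear_apply]
  have hsum : ∑ i, (b i * (φ ⬝ᵥ p i j)) • segre (frame c (p i) (some ⟨j, 0⟩)) = 0 := by
    have := congrArg (mulFactor j (Matrix.vecMulVec (Pi.single d 1) φ)) hb
    simp only [map_sum, map_smul, hcontract, hφw (), zero_smul, smul_smul] at this
    exact this
  have hbi := Fintype.linearIndependent_iff.mp (hli.comp (fun i => (i, some ⟨j, 0⟩))
    fun _ _ h => congrArg Prod.fst h) _ hsum i
  rw [hφp, mul_one] at hbi
  exact hi hbi

theorem map_univ_eq_of_sum_eq_of_linearIndependent [Fintype ι] {M : Type*} [AddCommGroup M]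
    [Module K M] {v s : ι → M} (hv : LinearIndependent K v)
    (hs : ∀ i, ∃ i', ∃ t : K, s i = t • v i') (hsum : ∑ i, s i = ∑ i, v i) :
    Finset.univ.val.map s = Finset.univ.val.map v := by
  classical
  choose g t hg using hs
  have hcoef : ∀ i', ∑ i with g i = i', t i = 1 := fun i' => by
    have h : ∑ i', (∑ i with g i = i', t i - 1) • v i' = 0 := by
      simp only [sub_smul, one_smul, Finset.sum_sub_distrib, Finset.sum_smul]
      rw [← hsum, sub_eq_zero, ← Finset.sum_fiberwise Finset.univ g s]
      exact Finset.sum_congr rfl fun i' _ => Finset.sum_congr rfl fun i hi => by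
        rw [hg, (Finset.mem_filter.mp hi).2]
    exact sub_eq_zero.mp (Fintype.linearIndependent_iff.mp hv _ h i')
  have hsurj : Function.Surjective g := fun i' => by
    by_contra! h
    have := hcoef i'
    rw [Finset.filter_eq_empty_iff.mpr fun i _ => h i, Finset.sum_empty] at this
    exact zero_ne_one this
  have hbij : Function.Bijective g := Finite.surjective_iff_bijective.mp hsurj
  have ht : ∀ i, t i = 1 := fun i => by
    have h : (Finset.univ.filter fun i' => g i' = g i) = {i} := by
      ext i'
      simp [hbij.1.eq_iff]
    simpa only [h, Finset.sum_singleton] using hcoef (g i)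
  have hsv : s = v ∘ Equiv.ofBijective g hbij := funext fun i => by
    rw [hg, ht, one_smul]
    rfl
  rw [hsv, ← Multiset.map_map]
  congr 1
  exact congrArg Finset.val (Finset.map_univ_equiv (Equiv.ofBijective g hbij))

end Uniqueness

section Coordinates

variable {q : ℕ} {a : Fin q → ℕ} {k : ℕ}

/-- The coordinates of a tensor in the standard basis. -/
def coords (a : Fin q → ℕ) : Ten q a ≃ₗ[ℂ] (BIdx q a → ℂ) :=
  (Basis.piTensorProduct fun j => Pi.basisFun ℂ (Fin (a j + 1))).equivFun

theorem coords_tprod (v : Factors a ℂ) : coords a (tprod ℂ v) = segre v := by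
  funext f
  simp [coords, segre, Module.Basis.equivFun_apply]

theorem map_tangent (v : Factors a ℂ) :
    (tangent a v).map (coords a).toLinearMap = tangentSpace v := by
  rw [tangent, Submodule.map_span]
  refine le_antisymm (Submodule.span_le.mpr ?_) (tangentSpace_le_iff.mpr fun j c => ?_)
  · rintro _ ⟨_, ⟨j, u, rfl⟩, rfl⟩
    exact (coords_tprod _).symm ▸ segre_update_mem_tangentSpace v j u
  · exact Submodule.subset_span ⟨_, ⟨j, _, rfl⟩, coords_tprod _⟩

theorem map_iSup_tangent {ι : Type*} (p : ι → Factors a ℂ) :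
    (⨆ i, tangent a (p i)).map (coords a).toLinearMap = ⨆ i, tangentSpace (p i) := by
  simp only [Submodule.map_iSup, map_tangent]

theorem tangent_le_iSup_iff {ι : Type*} {w : Factors a ℂ} {p : ι → Factors a ℂ} :
    tangent a w ≤ ⨆ i, tangent a (p i) ↔ tangentSpace w ≤ ⨆ i, tangentSpace (p i) := by
  rw [← map_tangent, ← map_iSup_tangent, Submodule.map_le_map_iff_of_injective (coords a).injective]

theorem finrank_iSup_tangent {ι : Type*} (p : ι → Factors a ℂ) :
    Module.finrank ℂ ↥(⨆ i, tangent a (p i)) = Module.finrank ℂ ↥(⨆ i, tangentSpace (p i)) := by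
  rw [← map_iSup_tangent]
  exact ((coords a).finrank_map_eq _).symm

theorem tprod_eq_smul_iff {v w : Factors a ℂ} {t : ℂ} :
    tprod ℂ w = t • tprod ℂ v ↔ segre w = t • segre v := by
  rw [← (coords a).injective.eq_iff, map_smul, coords_tprod, coords_tprod]

theorem sum_tprod_eq_iff {s p : Fin k → Factors a ℂ} :
    ∑ i, tprod ℂ (s i) = Phi a p ↔ ∑ i, segre (s i) = ∑ i, segre (p i) := by
  simp only [← (coords a).injective.eq_iff, Phi, map_sum, coords_tprod]

theorem linearIndependent_tprod_iff {ι : Type*} {p : ι → Factors a ℂ} :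
    LinearIndependent ℂ (fun i => tprod ℂ (p i)) ↔ LinearIndependent ℂ fun i => segre (p i) := by
  rw [← LinearMap.linearIndependent_iff (coords a).toLinearMap (coords a).ker]
  simp only [Function.comp_def, LinearEquiv.coe_coe, coords_tprod]

end Coordinates

section GeneralPoint

open MvPolynomial

variable {q : ℕ} {a : Fin q → ℕ} {k : ℕ}

theorem exists_evalW_of_eventually {P : (Fin k → Factors a ℂ) → Prop}
    (hP : ∀ᶠ x in zariskiGeneric (WIdx q a k) ℂ, P (toPoints x)) :
    ∃ F : MvPolynomial (WIdx q a k) ℂ, (∃ p, evalW F p ≠ 0) ∧ ∀ p, evalW F p ≠ 0 → P p := by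
  obtain ⟨F, hF, hFP⟩ := eventually_zariskiGeneric_iff.mp hP
  refine ⟨F, ?_, fun p hp => hFP _ hp⟩
  by_contra! h
  exact hF (MvPolynomial.funext fun x => (h (toPoints x)).trans (map_zero _).symm)

theorem eventually_toPoints_zero_ne_zero (a : Fin q → ℕ) (k : ℕ) (𝕜 : Type*) [Field 𝕜] :
    ∀ᶠ p in zariskiGeneric (WIdx q a k) 𝕜, ∀ i j, toPoints p i j 0 ≠ 0 :=
  Filter.eventually_all.mpr fun i => Filter.eventually_all.mpr fun j =>
    ⟨X (i, ⟨j, 0⟩), X_ne_zero _, fun p hp => by simpa using hp⟩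

variable [NeZero q] [∀ j, NeZero (a j)] {ℓ : ℕ} [Fact ℓ.Prime] {p₀ : Fin k → Factors a (ZMod ℓ)}
  {h₀ : BIdx q a → ZMod ℓ} {i₀ : Fin k}

theorem IsCertificate.tangentGeneral (hc : IsCertificate p₀ h₀ i₀) :
    TangentGeneral q a k (k * (1 + ∑ j, a j)) := by
  have hgeneric := hc.exists_genericFactors (𝕜 := ℂ)
  obtain ⟨h, hh⟩ := hgeneric i₀
  obtain ⟨F, ⟨p, hp⟩, hF⟩ : ∃ F : MvPolynomial (WIdx q a k) ℂ, (∃ p, evalW F p ≠ 0) ∧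
      ∀ p, evalW F p ≠ 0 → Module.finrank ℂ ↥(⨆ i, tangent a (p i)) = k * (1 + ∑ j, a j) ∧
        ∀ w : Factors a ℂ, (∀ j, w j ≠ 0) → tangent a w ≤ ⨆ i, tangent a (p i) →
          ∃ i, ∃ t : ℂ, tprod ℂ w = t • tprod ℂ (p i) := by
    refine exists_evalW_of_eventually ?_
    filter_upwards [eventually_toPoints_zero_ne_zero a k ℂ, hh.eventually_linearIndependent_frame,
      eventually_segre_mem_span_of_tangentSpace_le hgeneric] with x h0 hli hspan
    refine ⟨?_, fun w hw hle => ?_⟩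
    · rw [finrank_iSup_tangent, finrank_iSup_tangentSpace_eq h0 hli, Fintype.card_fin]
    · simp only [tprod_eq_smul_iff]
      exact exists_segre_eq_smul_of_mem_span (p := toPoints x)
        (fun i j h => h0 i j (congrFun h 0)) hli hw (hspan w (tangent_le_iSup_iff.mp hle))
  have heval : ∀ p c, evalWV (e := k * (1 + ∑ j, a j) - k * (1 + ∑ j, a j)) (rename .inl F) p c =
      evalW F p := fun p c => eval_rename _ _ _
  refine ⟨rename .inl F, ⟨p, 0, by rwa [heval]⟩, fun p c hp => ?_⟩
  rw [heval] at hp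
  have hempty : IsEmpty (Fin (k * (1 + ∑ j, a j) - k * (1 + ∑ j, a j))) := by
    rw [Nat.sub_self]
    infer_instance
  rw [Set.range_eq_empty, Submodule.span_empty, sup_bot_eq]
  exact hF p hp

theorem IsCertificate.identifiable (hc : IsCertificate p₀ h₀ i₀) : Identifiable q a k := by
  have hgeneric := hc.exists_genericFactors (𝕜 := ℂ)
  obtain ⟨h, hh⟩ := hgeneric i₀
  refine exists_evalW_of_eventually ?_
  filter_upwards [eventually_toPoints_zero_ne_zero a k ℂ, hh.eventually_linearIndependent_frame,
    eventually_segre_mem_span_of_sum_segre_eq hgeneric] with x h0 hli hspan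
  have hne : ∀ i j, toPoints x i j ≠ 0 := fun i j h => h0 i j (congrFun h 0)
  have hunique : ∀ s : Fin k → Ten q a, (∀ i, IsDecomposable (s i)) →
      ∑ i, s i = Phi a (toPoints x) →
        Finset.univ.val.map s = Finset.univ.val.map fun i => tprod ℂ (toPoints x i) := by
    intro s hs hsum
    choose v hv0 hv using hs
    obtain rfl : s = fun i => tprod ℂ (v i) := funext hv
    refine map_univ_eq_of_sum_eq_of_linearIndependent (K := ℂ) (linearIndependent_tprod_iff.mpr
      (hli.comp (fun i => (i, none)) fun _ _ h => congrArg Prod.fst h)) (fun i => ?_) hsum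
    simp only [tprod_eq_smul_iff]
    exact exists_segre_eq_smul_of_mem_span hne hli (hv0 i) (hspan v (sum_tprod_eq_iff.mp hsum) i)
  exact ⟨⟨fun i => tprod ℂ (toPoints x i), fun i => ⟨_, hne i, rfl⟩, rfl⟩,
    fun s t hs ht hs' ht' => (hunique s hs hs').trans (hunique t ht ht').symm⟩

end GeneralPoint

section Bits

open Polynomial

/-- The binary digits of `w`, as coefficients of a polynomial. Vectors over `ZMod 2` are encoded by
natural numbers in this way, so that addition becomes `^^^`. -/
def bitPoly (w : ℕ) : (ZMod 2)[X] :=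
  ∑ i ∈ w.bitIndices.toFinset, X ^ i

theorem coeff_bitPoly (w i : ℕ) : (bitPoly w).coeff i = if w.testBit i then 1 else 0 := by
  simp [bitPoly, coeff_X_pow]

theorem bitPoly_zero : bitPoly 0 = 0 := by simp [bitPoly]

theorem bitPoly_one : bitPoly 1 = 1 := by simp [bitPoly]

theorem bitPoly_xor (v w : ℕ) : bitPoly (v ^^^ w) = bitPoly v + bitPoly w := by
  ext i
  rw [coeff_add, coeff_bitPoly, coeff_bitPoly, coeff_bitPoly, Nat.testBit_xor]
  cases v.testBit i <;> cases w.testBit i <;> decide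

theorem bitPoly_shiftLeft (w s : ℕ) : bitPoly (w <<< s) = bitPoly w * X ^ s := by
  ext i
  rw [coeff_mul_X_pow', coeff_bitPoly, coeff_bitPoly, Nat.testBit_shiftLeft]
  split_ifs <;> simp_all

theorem coeff_bitPoly_shiftRight (w s i : ℕ) :
    (bitPoly (w >>> s)).coeff i = (bitPoly w).coeff (s + i) := by
  rw [coeff_bitPoly, coeff_bitPoly, Nat.testBit_shiftRight]

theorem coeff_bitPoly_log2 {w : ℕ} (hw : w ≠ 0) : (bitPoly w).coeff w.log2 = 1 := by
  rw [coeff_bitPoly, Nat.testBit_log2 hw, if_pos rfl]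

theorem bitPoly_ne_zero {w : ℕ} (hw : w ≠ 0) : bitPoly w ≠ 0 := fun h =>
  one_ne_zero ((coeff_bitPoly_log2 hw).symm.trans (by rw [h, coeff_zero]))

/-- The linear combination of the words `w x`, for `x` in `l`, with coefficients `b x`. -/
def xorSum {α : Type*} (l : List α) (b : α → ZMod 2) (w : α → ℕ) : ℕ :=
  l.foldr (fun x s => if b x = 0 then s else w x ^^^ s) 0

theorem bitPoly_xorSum {α : Type*} (l : List α) (b : α → ZMod 2) (w : α → ℕ) :
    bitPoly (xorSum l b w) = (l.map fun x => b x • bitPoly (w x)).sum := by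
  induction l with
  | nil => exact bitPoly_zero
  | cons x l ih =>
    rw [List.map_cons, List.sum_cons, ← ih]
    obtain h | h : b x = 0 ∨ b x = 1 := by generalize b x = z; revert z; decide
    · simp [xorSum, h]
    · simp [xorSum, h, bitPoly_xor]

end Bits

section GaussianElimination

open Polynomial

/-- Clears the leading digit of `v` in `w` by adding `v` if necessary. The kernel evaluates the
functions `Nat.xor`, … faster than the corresponding notation. -/
def clearLeading (v w : ℕ) : ℕ := w.xor (v.mul ((w.shiftRight v.log2).mod 2))

/-- Gaussian elimination over `ZMod 2`: each word is reduced by the previous `pivots`, and the test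
fails if the result is zero. -/
def eliminate (pivots : List ℕ) : List ℕ → Bool
  | [] => true
  | w :: ws =>
    let r := pivots.foldr clearLeading w
    r != 0 && eliminate (r :: pivots) ws

/-- The linear map encoded by `clearLeading v`. -/
def clearLeadingLinear (v : ℕ) : (ZMod 2)[X] →ₗ[ZMod 2] (ZMod 2)[X] :=
  LinearMap.id + (lcoeff (ZMod 2) v.log2).smulRight (bitPoly v)

theorem bitPoly_clearLeading (v w : ℕ) :
    bitPoly (clearLeading v w) = clearLeadingLinear v (bitPoly w) := by
  have hclear : clearLeading v w = w ^^^ (v * ((w >>> v.log2) % 2)) := rfl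
  rw [hclear, bitPoly_xor, Nat.shiftRight_eq_div_pow, ← Nat.toNat_testBit]
  cases h : w.testBit v.log2 <;> simp [clearLeadingLinear, coeff_bitPoly, bitPoly_zero, h]

theorem bitPoly_foldr_clearLeading (pivots : List ℕ) (w : ℕ) :
    bitPoly (pivots.foldr clearLeading w) = (pivots.map clearLeadingLinear).prod (bitPoly w) := by
  induction pivots with
  | nil => rfl
  | cons v pivots ih => simp [bitPoly_clearLeading, ih]

theorem clearLeadingLinear_bitPoly {v : ℕ} (hv : v ≠ 0) : clearLeadingLinear v (bitPoly v) = 0 := by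
  simp [clearLeadingLinear, coeff_bitPoly_log2 hv, CharTwo.add_self_eq_zero]

theorem linearIndependent_finSucc_of_map_eq_zero {K V W : Type*} [Field K] [AddCommGroup V]
    [Module K V] [AddCommGroup W] [Module K W] {n : ℕ} {f : V →ₗ[K] W} {v : Fin (n + 1) → V}
    (hv : LinearIndependent K fun i : Fin n => f (v i.succ)) (hfv : f (v 0) = 0) (h0 : v 0 ≠ 0) :
    LinearIndependent K v :=
  linearIndependent_finSucc.mpr ⟨.of_comp f hv, fun hmem =>
    h0 (Submodule.disjoint_def.mp (Submodule.range_ker_disjoint (v := Fin.tail v) hv) _ hmem hfv)⟩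

theorem linearIndependent_of_eliminate {α : Type*} {row : α → ℕ} {pivots : List ℕ} {l : List α}
    (h : eliminate pivots (l.map row)) : LinearIndependent (ZMod 2)
      fun i => (pivots.map clearLeadingLinear).prod (bitPoly (row (l.get i))) := by
  induction l generalizing pivots with
  | nil =>
    have : IsEmpty (Fin ([] : List α).length) := Fin.isEmpty
    exact linearIndependent_empty_type
  | cons x l ih =>
    rw [List.map_cons, eliminate, Bool.and_eq_true, bne_iff_ne] at h
    have hreduced := bitPoly_foldr_clearLeading pivots (row x)
    generalize pivots.foldr clearLeading (row x) = r at h hreduced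
    have htail := ih h.2
    simp only [List.map_cons, List.prod_cons, Module.End.mul_apply] at htail
    refine linearIndependent_finSucc_of_map_eq_zero (n := l.length) htail ?_ ?_
    · exact hreduced ▸ clearLeadingLinear_bitPoly h.1
    · exact hreduced ▸ bitPoly_ne_zero h.1

/-- Soundness of the elimination for vectors `A x` which a linear map `φ` encodes as words. -/
theorem linearIndependent_of_eliminate_map {α M : Type*} [AddCommGroup M] [Module (ZMod 2) M]
    {l : List α} (hl : ∀ x, x ∈ l) {A : α → M} {row : α → ℕ} (φ : M →ₗ[ZMod 2] (ZMod 2)[X])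
    (hrow : ∀ x, bitPoly (row x) = φ (A x)) (h : eliminate [] (l.map row)) :
    LinearIndependent (ZMod 2) A := by
  have hget : Function.Surjective l.get := fun x => List.get_of_mem (hl x)
  have hA : LinearIndependent (ZMod 2) (φ ∘ A ∘ l.get) := by
    convert linearIndependent_of_eliminate h using 2 with i
    exact (hrow _).symm
  have hA' := hA.of_comp φ |>.comp _ (Function.injective_surjInv hget)
  rwa [Function.comp_assoc, (Function.rightInverse_surjInv hget).comp_eq_id] at hA'

end GaussianElimination

section Kronecker

open Polynomial

variable {n m : ℕ}

/-- The position of the `f`-th coordinate in the word which encodes a tensor. -/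
def kroneckerIndex (f : BIdx n fun _ => m) : ℕ := ∑ j, (f j : ℕ) * (m + 1) ^ (j : ℕ)

/-- The word which encodes the tensor `segre v`. -/
def segreWord : ∀ {n : ℕ}, Factors (fun _ : Fin n => m) (ZMod 2) → ℕ
  | 0, _ => 1
  | n + 1, v => xorSum (List.finRange (m + 1)) (v (Fin.last n)) fun c =>
      segreWord (fun j => v j.castSucc) <<< ((c : ℕ) * (m + 1) ^ n)

/-- The value at `segre v` of the linear form which the word `h` encodes. -/
def evalForm : ∀ {n : ℕ}, ℕ → Factors (fun _ : Fin n => m) (ZMod 2) → ZMod 2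
  | 0, h, _ => if h.testBit 0 then 1 else 0
  | n + 1, h, v => evalForm (xorSum (List.finRange (m + 1)) (v (Fin.last n)) fun c =>
      h >>> ((c : ℕ) * (m + 1) ^ n)) fun j => v j.castSucc

theorem bitPoly_segreWord (v : Factors (fun _ : Fin n => m) (ZMod 2)) :
    bitPoly (segreWord v) = ∑ f, segre v f • X ^ kroneckerIndex f := by
  have hprod : bitPoly (segreWord v) =
      ∏ j, ∑ c, v j c • (X : (ZMod 2)[X]) ^ ((c : ℕ) * (m + 1) ^ (j : ℕ)) := by
    induction n with
    | zero => simp [segreWord, bitPoly_one]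
    | succ n ih =>
      simp only [segreWord, bitPoly_xorSum, bitPoly_shiftLeft, ih, ← Fin.sum_univ_def,
        Fin.prod_univ_castSucc, Finset.mul_sum, mul_smul_comm, Fin.val_castSucc, Fin.val_last]
  rw [hprod, Fintype.prod_sum]
  exact Finset.sum_congr rfl fun f _ => by
    rw [Finset.prod_smul, Finset.prod_pow_eq_pow_sum, segre, kroneckerIndex]

theorem coeff_bitPoly_xorSum_finRange {N : ℕ} (b : Fin N → ZMod 2) (w : Fin N → ℕ) (i : ℕ) :
    (bitPoly (xorSum (List.finRange N) b w)).coeff i = ∑ c, b c * (bitPoly (w c)).coeff i := by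
  rw [bitPoly_xorSum, ← Fin.sum_univ_def, finsetSum_coeff]
  simp only [coeff_smul, smul_eq_mul]

theorem evalForm_eq_dotProduct (h : ℕ) (v : Factors (fun _ : Fin n => m) (ZMod 2)) :
    evalForm h v = (fun f => (bitPoly h).coeff (kroneckerIndex f)) ⬝ᵥ segre v := by
  induction n generalizing h with
  | zero => simp [evalForm, coeff_bitPoly, dotProduct, segre, kroneckerIndex]
  | succ n ih =>
    rw [evalForm, ih]
    simp only [dotProduct, coeff_bitPoly_xorSum_finRange, coeff_bitPoly_shiftRight, Finset.sum_mul]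
    rw [Finset.sum_comm, ← Fintype.sum_prod_type', ← (Fin.snocEquiv fun _ => Fin (m + 1)).sum_comp]
    refine Finset.sum_congr rfl fun x _ => ?_
    simp only [kroneckerIndex, segre, Fin.snocEquiv_apply, Fin.sum_univ_castSucc,
      Fin.prod_univ_castSucc, Fin.snoc_castSucc, Fin.snoc_last, Fin.val_castSucc, Fin.val_last]
    rw [add_comm (∑ j, _)]
    ring

end Kronecker

section Verification

open Polynomial

variable {n m k : ℕ}

/-- The labels of the tangent directions, in the order used by the elimination. -/
def directions (n m : ℕ) : List (Σ _ : Fin n, Fin m) :=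
  (List.finRange n).sigma fun _ => List.finRange m

/-- The labels of the members of the tangent frames at `k` points. -/
def frameLabels (n m k : ℕ) : List (Fin k × Option (Σ _ : Fin n, Fin m)) :=
  List.finRange k ×ˢ (none :: (directions n m).map some)

theorem mem_directions (x : Σ _ : Fin n, Fin m) : x ∈ directions n m :=
  List.mem_sigma.mpr ⟨List.mem_finRange _, List.mem_finRange _⟩

theorem mem_frameLabels (x : Fin k × Option (Σ _ : Fin n, Fin m)) : x ∈ frameLabels n m k := by
  rcases x with ⟨i, _ | x⟩ <;> simp [frameLabels, mem_directions]

/-- The entries of `hessian h v`, where the word `H` encodes `h`. -/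
def hessianEntry (H : ℕ) (v : Factors (fun _ : Fin n => m) (ZMod 2))
    (x y : Σ _ : Fin n, Fin m) : ZMod 2 :=
  if x.1 = y.1 then 0 else
    evalForm H (setFactor (setFactor v x.1 x.2.succ) y.1 y.2.succ)

/-- Decides whether the points `p` and the linear form encoded by `H` are a certificate at
`p i₀`. -/
def checkCertificate (p : Fin k → Factors (fun _ : Fin n => m) (ZMod 2)) (H : ℕ) (i₀ : Fin k) :
    Bool :=
  (frameLabels n m k).all (fun x => evalForm H (frame 0 (p x.1) x.2) == 0) &&
    eliminate [] ((directions n m).map fun x =>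
      xorSum (directions n m) (hessianEntry H (p i₀) x) fun y => 1 <<< (m * y.1 + y.2)) &&
    eliminate [] ((frameLabels n m k).map fun x => segreWord (frame 0 (p x.1) x.2))

/-- The point whose coordinate `p j c` is the binary digit of `code` at `(m + 1) * j + c`. -/
def point (code : ℕ) : Factors (fun _ : Fin n => m) (ZMod 2) :=
  fun j c => if code.testBit ((m + 1) * j + c) then 1 else 0

theorem hessianEntry_eq (H : ℕ) (v : Factors (fun _ : Fin n => m) (ZMod 2))
    (x y : Σ _ : Fin n, Fin m) :
    hessianEntry H v x y = hessian (fun f => (bitPoly H).coeff (kroneckerIndex f)) v x y := by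
  rw [hessianEntry, hessian, evalForm_eq_dotProduct]

theorem bitPoly_xorSum_directions (b : (Σ _ : Fin n, Fin m) → ZMod 2)
    (w : (Σ _ : Fin n, Fin m) → ℕ) :
    bitPoly (xorSum (directions n m) b w) =
      Fintype.linearCombination (ZMod 2) (fun y => bitPoly (w y)) b := by
  have hnodup : (directions n m).Nodup :=
    (List.nodup_finRange n).sigma fun _ => List.nodup_finRange m
  have huniv : (directions n m).toFinset = Finset.univ := by
    ext x; simp [mem_directions]
  rw [bitPoly_xorSum, ← List.sum_toFinset _ hnodup, huniv, Fintype.linearCombination_apply]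

theorem isCertificate_of_checkCertificate {p : Fin k → Factors (fun _ : Fin n => m) (ZMod 2)}
    {H : ℕ} {i₀ : Fin k} (h : checkCertificate p H i₀) :
    IsCertificate p (fun f => (bitPoly H).coeff (kroneckerIndex f)) i₀ := by
  simp only [checkCertificate, Bool.and_eq_true, List.all_eq_true, beq_iff_eq] at h
  obtain ⟨⟨hannihilate, hhessian⟩, hframes⟩ := h
  refine ⟨?_, fun i r => ?_, ?_⟩
  · refine linearIndependent_of_eliminate_map mem_frameLabels
      (Fintype.linearCombination (ZMod 2) fun f => X ^ kroneckerIndex f) (fun x => ?_) hframes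
    rw [bitPoly_segreWord, Fintype.linearCombination_apply]
  · rw [← evalForm_eq_dotProduct]
    exact hannihilate (i, r) (mem_frameLabels _)
  · have hrows := linearIndependent_of_eliminate_map mem_directions _
      (fun x => (bitPoly_xorSum_directions _ _).trans
        (congrArg _ (funext fun y => hessianEntry_eq H (p i₀) x y))) hhessian
    exact ((Matrix.isUnit_iff_isUnit_det _).mp
      (Matrix.linearIndependent_rows_iff_isUnit.mp hrows)).ne_zero

end Verification

section Certificates

theorem exists_isCertificate_of_le {q : ℕ} {a : Fin q → ℕ} {F : Type*} [Field F] {k K : ℕ}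
    [NeZero k] [NeZero K] (hk : k ≤ K)
    (hK : ∃ (p : Fin K → Factors a F) (h : _), IsCertificate p h 0) :
    ∃ (p : Fin k → Factors a F) (h : _), IsCertificate p h 0 := by
  obtain ⟨p, h, hp⟩ := hK
  exact ⟨p ∘ Fin.castLE hk, h, IsCertificate.comp (e := Fin.castLE hk) hp (Fin.castLE_injective hk)⟩

/-! The points were found by random search, and the linear forms by solving for the annihilator of
the tangent frames. -/

theorem exists_isCertificate_four :
    ∃ (p : Fin 8 → Factors (fun _ : Fin 4 => 2) (ZMod 2)) (h : _), IsCertificate p h 0 := by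
  refine ⟨point ∘ ![585, 859, 1903, 2669, 3817, 4061, 2783, 2043], _,
    isCertificate_of_checkCertificate (H := 1657940902639692258759840) ?_⟩
  decide +kernel

theorem exists_isCertificate_five :
    ∃ (p : Fin 22 → Factors (fun _ : Fin 5 => 2) (ZMod 2)) (h : _), IsCertificate p h 0 := by
  refine ⟨point ∘
    ![4681, 32601, 24173, 5871, 12927, 7007, 29661, 14329, 5755, 14029, 24399, 30573, 31311, 7929,
      14955, 29563, 21209, 8155, 16367, 23293, 22475, 23401], _,
    isCertificate_of_checkCertificate (H :=
      1669709376802538869866559330060029079022397801038935231480014716603140240) ?_⟩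
  decide +kernel

theorem exists_isCertificate_six :
    ∃ (p : Fin 56 → Factors (fun _ : Fin 6 => 2) (ZMod 2)) (h : _), IsCertificate p h 0 := by
  refine ⟨point ∘
    ![37449, 188143, 259791, 195449, 177743, 112475, 40953, 106095, 177915, 113631, 245707, 176989,
      38655, 250751, 113385, 114505, 245337, 54235, 262109, 186333, 251849, 171725, 56959, 40795,
      103149, 104395, 65133, 39785, 252635, 111307, 105341, 121851, 259709, 245629, 48077, 64239,
      65275, 169967, 45903, 128873, 47707, 193533, 169561, 259051, 122861, 127705, 54009, 235115,
      193135, 236363, 129663, 187243, 46829, 130651, 195535, 119373], _,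
    isCertificate_of_checkCertificate (H :=
      (5630955838125083887264760357579391162045797298912517512874991768980484368
      ||| 1120704518702688487054047481829397509386656392342568103861008814052880480 <<< 243
      ||| 5757328578990031559068642078305357765347454166865326043913201781505669556 <<< 486)) ?_⟩
  decide +kernel

end Certificates

/-- `n` copies of `ℙ²`, `4 ≤ n ≤ 6`. -/
theorem stmt_6 (n : ℕ) (h4 : 4 ≤ n) (h6 : n ≤ 6) (k : ℕ) (hk : 0 < k)
    (hkc : (k : ℚ) < 3 ^ n / (2 * n + 1)) :
    TangentGeneral n (fun _ => 2) k (k * (2 * n + 1)) ∧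
      Identifiable n (fun _ => 2) k := by
  rw [lt_div_iff₀ (by positivity)] at hkc
  have hbound : k * (2 * n + 1) < 3 ^ n := by exact_mod_cast hkc
  have : NeZero n := ⟨by omega⟩
  have : NeZero k := ⟨hk.ne'⟩
  obtain ⟨p, h, hc⟩ :
      ∃ (p : Fin k → Factors (fun _ : Fin n => 2) (ZMod 2)) (h : _), IsCertificate p h 0 := by
    interval_cases n
    · exact exists_isCertificate_of_le (by omega) exists_isCertificate_four
    · exact exists_isCertificate_of_le (by omega) exists_isCertificate_five
    · exact exists_isCertificate_of_le (by omega) exists_isCertificate_six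
  have hdim : k * (2 * n + 1) = k * (1 + ∑ _j : Fin n, 2) := by simp [mul_comm, add_comm]
  exact ⟨hdim ▸ hc.tangentGeneral, hc.identifiable⟩
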